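/- Let γ > 0, 1 < α < 2, p > 1, a > 0, b > 0, and let f be locally integrable on [0,∞). Suppose w ∈ C¹([0,∞)), w ≢ 0, the function t ↦ ₀I_t^{2−α}(w(s) − w'(0)s − w(0)) is in AC²([0,T]) for every T > 0, and for almost every t ≥ 0 one has (₀D_t^α w)(t) + a·w(t) = (₀I_t^γ f)(t) and f(t) ≥ b·|w(t)|^p. Then liminf_{t→+∞} |w(t)| = 0, and liminf_{t→+∞} t^{min{(α+γ−1)/p, γ/(p−1)}}·|w(t)| < +∞. -/

import Mathlib

/-!
For `μ ≥ 1` the fractional integrals obey `I^μ I^σ = I^(μ+σ)`. Applying `I^μ` with a large `μ` to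
the equation therefore removes both derivatives and gives, up to powers of `T` coming from the
initial values,

`I^(μ+γ) f = I^(μ-α) w + a I^μ w`.

As `f ≥ b |w|^p`, Young's inequality absorbs the right side into the left side. What remains is
`I^(μ+γ) |w|^p (T) = O(T^(μ+γ-θp))` with `θ = min ((α+γ-1)/p) (γ/(p-1))`. The kernel of `I^(μ+γ)`
has mass of order `T^(μ+γ)` on `[T/2, T]`, so `t^θ |w t|` stays bounded along a sequence tending to
infinity. Both claims follow, because `θ > 0`.
-/

open MeasureTheory Filter

/-- Riemann–Liouville fractional integral of order `σ` based at `0`: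
`(₀I_t^σ f)(t) = (1/Γ(σ)) ∫₀ᵗ (t−s)^{σ−1} f(s) ds`. -/
noncomputable def rlInt (σ : ℝ) (f : ℝ → ℝ) (t : ℝ) : ℝ :=
  (1 / Real.Gamma σ) * ∫ s in (0:ℝ)..t, (t - s) ^ (σ - 1) * f s

/-- The function whose second derivative is the (left) Caputo derivative of order `α ∈ (1,2]`:
for `α < 2` it is `₀I_t^{2−α}(w(s) − w'(0)·s − w(0))`, and for `α = 2` it is `w` itself. -/
noncomputable def capKernel (α : ℝ) (w : ℝ → ℝ) : ℝ → ℝ :=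
  if α = 2 then w else rlInt (2 - α) (fun s => w s - deriv w 0 * s - w 0)

/-- Left Caputo fractional derivative of order `α ∈ (1,2]`:
`(₀D_t^α w)(t) = (d²/dt²)[ ₀I_t^{2−α}(w(s) − w'(0)s − w(0)) ](t)` (second derivative of `w` when `α = 2`). -/
noncomputable def caputoD (α : ℝ) (w : ℝ → ℝ) : ℝ → ℝ :=
  deriv (deriv (capKernel α w))

/-- `g ∈ AC²([0,T])`: `g` is differentiable on `[0,T]`, its second derivative is integrable,
and `g'` is the integral of `g''` (i.e. `g'` is absolutely continuous). -/
def AC2On (g : ℝ → ℝ) (T : ℝ) : Prop :=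
  (∀ t ∈ Set.Icc (0:ℝ) T, DifferentiableAt ℝ g t) ∧
  IntervalIntegrable (deriv (deriv g)) volume 0 T ∧
  ∀ t ∈ Set.Icc (0:ℝ) T, deriv g t = deriv g 0 + ∫ s in (0:ℝ)..t, deriv (deriv g) s

open Asymptotics

/-! ### Fubini on a triangle -/

lemma integrable_indicator_mul_convolution_integrand {P κ g : ℝ → ℝ} {T : ℝ} (hT : 0 ≤ T)
    (hP : Continuous P) (hκ : IntervalIntegrable κ volume 0 T)
    (hg : IntervalIntegrable g volume 0 T) :
    Integrable ({z : ℝ × ℝ | z.2 < z.1}.indicator fun z => P z.1 * κ (z.1 - z.2) * g z.2)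
      ((volume.restrict (Set.Ioc 0 T)).prod (volume.restrict (Set.Ioc 0 T))) := by
  have hκ' : Integrable ((Set.Ioo 0 T).indicator κ) :=
    (integrable_indicator_iff measurableSet_Ioo).2
      ((intervalIntegrable_iff_integrableOn_Ioo_of_le hT).1 hκ)
  have hg' : Integrable ((Set.Ioc 0 T).indicator g) :=
    (integrable_indicator_iff measurableSet_Ioc).2
      ((intervalIntegrable_iff_integrableOn_Ioc_of_le hT).1 hg)
  obtain ⟨C, hC⟩ := isCompact_Icc.exists_bound_of_continuousOn
    (s := Set.Icc 0 T) hP.continuousOn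
  rw [Measure.prod_restrict]
  have hconv := ((hg'.convolution_integrand (ContinuousLinearMap.mul ℝ ℝ) hκ').integrableOn
    (s := Set.Ioc 0 T ×ˢ Set.Ioc 0 T))
  have hbdd : IntegrableOn (fun z : ℝ × ℝ => P z.1 *
      ((Set.Ioc 0 T).indicator g z.2 * (Set.Ioo 0 T).indicator κ (z.1 - z.2)))
      (Set.Ioc 0 T ×ˢ Set.Ioc 0 T) := by
    refine Integrable.bdd_mul (c := C) hconv
      (hP.comp continuous_fst).aestronglyMeasurable ?_
    filter_upwards [ae_restrict_mem (measurableSet_Ioc.prod measurableSet_Ioc)] with z hz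
    exact hC z.1 (Set.Ioc_subset_Icc_self hz.1)
  refine hbdd.congr_fun (fun z hz => ?_) (measurableSet_Ioc.prod measurableSet_Ioc)
  obtain ⟨t, s⟩ := z
  obtain ⟨ht, hs⟩ : t ∈ Set.Ioc 0 T ∧ s ∈ Set.Ioc 0 T := hz
  have hmem : t - s ∈ Set.Ioo 0 T ↔ s < t :=
    ⟨fun h => sub_pos.1 h.1, fun h => ⟨sub_pos.2 h, by linarith [ht.2, hs.1]⟩⟩
  simp only [Set.indicator_apply, hmem, hs, Set.mem_ofPred_eq]
  split_ifs <;> ring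

lemma integral_mul_integral_convolution_swap {P κ g : ℝ → ℝ} {T : ℝ} (hT : 0 ≤ T)
    (hP : Continuous P) (hκ : IntervalIntegrable κ volume 0 T)
    (hg : IntervalIntegrable g volume 0 T) :
    ∫ t in (0 : ℝ)..T, P t * ∫ s in (0 : ℝ)..t, κ (t - s) * g s
      = ∫ s in (0 : ℝ)..T, (∫ t in s..T, P t * κ (t - s)) * g s := by
  set F := {z : ℝ × ℝ | z.2 < z.1}.indicator fun z => P z.1 * κ (z.1 - z.2) * g z.2
  have hleft : ∀ t ∈ Set.Ioc 0 T, ∫ s in Set.Ioc 0 T, F (t, s)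
      = P t * ∫ s in (0 : ℝ)..t, κ (t - s) * g s := by
    intro t ht
    have hslice : (fun s => F (t, s))
        = (Set.Iio t).indicator fun s => P t * κ (t - s) * g s := rfl
    have hinter : Set.Ioc 0 T ∩ Set.Iio t = Set.Ioo 0 t := by grind
    rw [hslice, setIntegral_indicator measurableSet_Iio, hinter, ← integral_Ioc_eq_integral_Ioo,
      ← intervalIntegral.integral_of_le ht.1.le, ← intervalIntegral.integral_const_mul]
    simp only [mul_assoc]
  have hright : ∀ s ∈ Set.Ioc 0 T, ∫ t in Set.Ioc 0 T, F (t, s)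
      = (∫ t in s..T, P t * κ (t - s)) * g s := by
    intro s hs
    have hslice : (fun t => F (t, s))
        = (Set.Ioi s).indicator fun t => P t * κ (t - s) * g s := rfl
    have hinter : Set.Ioc 0 T ∩ Set.Ioi s = Set.Ioc s T := by grind
    rw [hslice, setIntegral_indicator measurableSet_Ioi, hinter,
      ← intervalIntegral.integral_of_le hs.2, ← intervalIntegral.integral_mul_const]
  rw [intervalIntegral.integral_of_le hT, intervalIntegral.integral_of_le hT,
    ← setIntegral_congr_fun measurableSet_Ioc hleft,
    ← setIntegral_congr_fun measurableSet_Ioc hright]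
  exact integral_integral_swap (integrable_indicator_mul_convolution_integrand hT hP hκ hg)

/-! ### Fractional integrals -/

section rlInt

variable {σ μ T : ℝ} {f g : ℝ → ℝ}

lemma continuous_sub_rpow (hσ : 1 ≤ σ) (t : ℝ) : Continuous fun s : ℝ => (t - s) ^ (σ - 1) :=
  (continuous_const.sub continuous_id).rpow_const fun _ => Or.inr (sub_nonneg.2 hσ)

lemma intervalIntegrable_sub_rpow_mul (hσ : 1 ≤ σ) (t : ℝ) {a b : ℝ}
    (hf : IntervalIntegrable f volume a b) :
    IntervalIntegrable (fun s => (t - s) ^ (σ - 1) * f s) volume a b :=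
  hf.continuousOn_mul (continuous_sub_rpow hσ t).continuousOn

lemma integral_sub_rpow (hσ : 0 < σ) (R T : ℝ) :
    ∫ s in R..T, (T - s) ^ (σ - 1) = (T - R) ^ σ / σ := by
  rw [intervalIntegral.integral_comp_sub_left (fun x => x ^ (σ - 1)) T, sub_self,
    integral_rpow (Or.inl (by linarith)), sub_add_cancel, Real.zero_rpow hσ.ne', sub_zero]

lemma intervalIntegrable_sub_rpow (hσ : 0 < σ) (R T : ℝ) :
    IntervalIntegrable (fun s => (T - s) ^ (σ - 1)) volume R T := by
  have h : IntervalIntegrable (fun x : ℝ => x ^ (σ - 1)) volume (T - R) 0 :=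
    intervalIntegral.intervalIntegrable_rpow' (by linarith)
  simpa using h.comp_sub_left T

lemma rlInt_const_mul (σ c : ℝ) (f : ℝ → ℝ) (t : ℝ) :
    rlInt σ (fun s => c * f s) t = c * rlInt σ f t := by
  simp only [rlInt, mul_left_comm _ c, intervalIntegral.integral_const_mul]

lemma rlInt_add (hσ : 1 ≤ σ) (hf : IntervalIntegrable f volume 0 T)
    (hg : IntervalIntegrable g volume 0 T) :
    rlInt σ (fun s => f s + g s) T = rlInt σ f T + rlInt σ g T := by
  simp only [rlInt, mul_add]
  rw [intervalIntegral.integral_add (intervalIntegrable_sub_rpow_mul hσ T hf)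
    (intervalIntegrable_sub_rpow_mul hσ T hg), mul_add]

lemma rlInt_sub (hσ : 1 ≤ σ) (hf : IntervalIntegrable f volume 0 T)
    (hg : IntervalIntegrable g volume 0 T) :
    rlInt σ (fun s => f s - g s) T = rlInt σ f T - rlInt σ g T := by
  simp only [rlInt, mul_sub]
  rw [intervalIntegral.integral_sub (intervalIntegrable_sub_rpow_mul hσ T hf)
    (intervalIntegrable_sub_rpow_mul hσ T hg), mul_sub]

lemma rlInt_congr_ae (hT : 0 ≤ T) (h : f =ᵐ[volume.restrict (Set.Icc 0 T)] g) :
    rlInt σ f T = rlInt σ g T := by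
  unfold rlInt
  congr 1
  apply intervalIntegral.integral_congr_ae_restrict
  rw [Set.uIoc_of_le hT]
  filter_upwards [ae_restrict_of_ae_restrict_of_subset Set.Ioc_subset_Icc_self h] with s hs
  rw [hs]

lemma rlInt_congr (hT : 0 ≤ T) (h : Set.EqOn f g (Set.Icc 0 T)) : rlInt σ f T = rlInt σ g T :=
  rlInt_congr_ae hT ((ae_restrict_mem measurableSet_Icc).mono h)

lemma rlInt_mono_ae (hσ : 1 ≤ σ) (hT : 0 ≤ T) (hf : IntervalIntegrable f volume 0 T)
    (hg : IntervalIntegrable g volume 0 T) (h : f ≤ᵐ[volume.restrict (Set.Icc 0 T)] g) :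
    rlInt σ f T ≤ rlInt σ g T := by
  have hΓ : 0 < Real.Gamma σ := Real.Gamma_pos_of_pos (by linarith)
  refine mul_le_mul_of_nonneg_left ?_ (one_div_pos.2 hΓ).le
  refine intervalIntegral.integral_mono_ae_restrict hT (intervalIntegrable_sub_rpow_mul hσ T hf)
    (intervalIntegrable_sub_rpow_mul hσ T hg) ?_
  filter_upwards [h, ae_restrict_mem measurableSet_Icc] with s hs hsT
  exact mul_le_mul_of_nonneg_left hs (Real.rpow_nonneg (sub_nonneg.2 hsT.2) _)

lemma rlInt_nonneg (hσ : 0 < σ) (hT : 0 ≤ T) (hf : ∀ s ∈ Set.Icc 0 T, 0 ≤ f s) :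
    0 ≤ rlInt σ f T := by
  have hΓ : 0 < Real.Gamma σ := Real.Gamma_pos_of_pos hσ
  refine mul_nonneg (one_div_pos.2 hΓ).le (intervalIntegral.integral_nonneg hT fun s hs => ?_)
  exact mul_nonneg (Real.rpow_nonneg (sub_nonneg.2 hs.2) _) (hf s hs)

lemma rlInt_zero_right (σ : ℝ) (f : ℝ → ℝ) : rlInt σ f 0 = 0 := by
  simp [rlInt]

lemma rlInt_one_left (f : ℝ → ℝ) (t : ℝ) : rlInt 1 f t = ∫ s in (0 : ℝ)..t, f s := by
  simp [rlInt]

lemma rlInt_rpow {β : ℝ} (hσ : 0 < σ) (hβ : 0 < β) (hT : 0 < T) :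
    rlInt σ (fun s => s ^ (β - 1)) T
      = Real.Gamma β / Real.Gamma (σ + β) * T ^ (σ + β - 1) := by
  have hΓσ := (Real.Gamma_pos_of_pos hσ).ne'
  have hΓσβ := (Real.Gamma_pos_of_pos (add_pos hσ hβ)).ne'
  have hbeta : ∫ s in (0 : ℝ)..T, (T - s) ^ (σ - 1) * s ^ (β - 1)
      = T ^ (σ + β - 1) * ProbabilityTheory.beta β σ := by
    have hscaled := Complex.betaIntegral_scaled β σ hT
    have hcast : ∀ s ∈ Set.uIcc 0 T, (s : ℂ) ^ ((β : ℂ) - 1) * ((T : ℂ) - s) ^ ((σ : ℂ) - 1)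
        = ((s ^ (β - 1) * (T - s) ^ (σ - 1) : ℝ) : ℂ) := by
      intro s hs
      rw [Set.uIcc_of_le hT.le] at hs
      push_cast [Complex.ofReal_cpow hs.1, Complex.ofReal_cpow (sub_nonneg.2 hs.2)]
      rfl
    rw [intervalIntegral.integral_congr hcast, intervalIntegral.integral_ofReal] at hscaled
    have hre := congrArg Complex.re hscaled
    rw [Complex.ofReal_re, show (β + σ - 1 : ℂ) = ((σ + β - 1 : ℝ) : ℂ) by push_cast; ring,
      ← Complex.ofReal_cpow hT.le, Complex.re_ofReal_mul,
      ← ProbabilityTheory.beta_eq_betaIntegralReal β σ hβ hσ] at hre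
    simpa only [mul_comm] using hre
  rw [rlInt, hbeta, ProbabilityTheory.beta, add_comm β σ]
  field_simp

lemma rlInt_const (hσ : 0 < σ) (hT : 0 < T) (c : ℝ) :
    rlInt σ (fun _ => c) T = c * (T ^ σ / Real.Gamma (σ + 1)) := by
  have h := rlInt_rpow hσ one_pos hT
  simp only [sub_self, Real.rpow_zero, Real.Gamma_one, add_sub_cancel_right] at h
  simpa [h, div_eq_inv_mul] using rlInt_const_mul σ c (fun _ => 1) T

lemma rlInt_id (hσ : 0 < σ) (hT : 0 < T) :
    rlInt σ (fun s => s) T = T ^ (σ + 1) / Real.Gamma (σ + 2) := by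
  have h := rlInt_rpow hσ two_pos hT
  rw [show (2 : ℝ) - 1 = 1 by norm_num, show σ + 2 - 1 = σ + 1 by ring, Real.Gamma_two,
    one_div_mul_eq_div] at h
  simpa only [Real.rpow_one] using h

lemma rlInt_sub_affine (hσ : 1 ≤ σ) (hT : 0 < T) (hf : IntervalIntegrable f volume 0 T)
    (c₁ c₀ : ℝ) :
    rlInt σ (fun s => f s - c₁ * s - c₀) T
      = rlInt σ f T - c₁ * (T ^ (σ + 1) / Real.Gamma (σ + 2))
        - c₀ * (T ^ σ / Real.Gamma (σ + 1)) := by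
  have hlin : IntervalIntegrable (fun s => c₁ * s) volume 0 T :=
    (continuous_const_mul c₁).intervalIntegrable _ _
  have hσ0 : 0 < σ := by linarith
  rw [rlInt_sub hσ (hf.sub hlin) intervalIntegrable_const, rlInt_sub hσ hf hlin,
    rlInt_const_mul, rlInt_id hσ0 hT, rlInt_const hσ0 hT]

/-! ### The semigroup law -/

lemma integral_sub_rpow_mul_sub_rpow (hμ : 0 < μ) (hσ : 0 < σ) {s : ℝ} (hs : s < T) :
    ∫ t in s..T, (T - t) ^ (μ - 1) * (t - s) ^ (σ - 1)
      = Real.Gamma μ * Real.Gamma σ / Real.Gamma (μ + σ) * (T - s) ^ (μ + σ - 1) := by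
  have hshift := intervalIntegral.integral_comp_sub_right (a := s) (b := T)
    (fun u : ℝ => (T - s - u) ^ (μ - 1) * u ^ (σ - 1)) s
  simp only [sub_sub_sub_cancel_right, sub_self] at hshift
  have hpow := rlInt_rpow hμ hσ (sub_pos.2 hs)
  rw [rlInt, ← hshift] at hpow
  have hΓ := (Real.Gamma_pos_of_pos hμ).ne'
  field_simp at hpow ⊢
  linarith

/-- As the outer kernel is bounded, the identity holds at every `T`, not just almost everywhere. -/
lemma rlInt_rlInt (hμ : 1 ≤ μ) (hσ : 0 < σ) (hT : 0 ≤ T) (hg : IntervalIntegrable g volume 0 T) :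
    rlInt μ (rlInt σ g) T = rlInt (μ + σ) g T := by
  have hμ0 : 0 < μ := by linarith
  have hΓμ := (Real.Gamma_pos_of_pos hμ0).ne'
  have hΓσ := (Real.Gamma_pos_of_pos hσ).ne'
  have hκ : IntervalIntegrable (fun u : ℝ => u ^ (σ - 1)) volume 0 T :=
    intervalIntegral.intervalIntegrable_rpow' (by linarith)
  have hinner : ∀ᵐ s ∂volume.restrict (Set.uIoc 0 T),
      (∫ t in s..T, (T - t) ^ (μ - 1) * (t - s) ^ (σ - 1)) * g s
        = Real.Gamma μ * Real.Gamma σ / Real.Gamma (μ + σ)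
          * ((T - s) ^ (μ + σ - 1) * g s) := by
    rw [Set.uIoc_of_le hT, Measure.restrict_congr_set Ioo_ae_eq_Ioc.symm]
    filter_upwards [ae_restrict_mem measurableSet_Ioo] with s hs
    rw [integral_sub_rpow_mul_sub_rpow hμ0 hσ hs.2, mul_assoc]
  calc rlInt μ (rlInt σ g) T
      = 1 / Real.Gamma μ * (1 / Real.Gamma σ * ∫ t in (0 : ℝ)..T,
          (T - t) ^ (μ - 1) * ∫ s in (0 : ℝ)..t, (t - s) ^ (σ - 1) * g s) := by
        simp only [rlInt, mul_left_comm _ (1 / Real.Gamma σ), intervalIntegral.integral_const_mul]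
    _ = rlInt (μ + σ) g T := by
        rw [integral_mul_integral_convolution_swap hT (continuous_sub_rpow hμ T) hκ hg,
          intervalIntegral.integral_congr_ae_restrict hinner,
          intervalIntegral.integral_const_mul, rlInt]
        field_simp

end rlInt

/-! ### Fractional integrals of second derivatives -/

namespace AC2On

variable {k : ℝ → ℝ} {T ν : ℝ}

lemma mono (hk : AC2On k T) {t : ℝ} (ht : 0 ≤ t) (htT : t ≤ T) : AC2On k t :=
  ⟨fun s hs => hk.1 s ⟨hs.1, hs.2.trans htT⟩,
    hk.2.1.mono_set (by
      rw [Set.uIcc_of_le ht, Set.uIcc_of_le (ht.trans htT)]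
      exact Set.Icc_subset_Icc_right htT),
    fun s hs => hk.2.2 s ⟨hs.1, hs.2.trans htT⟩⟩

lemma intervalIntegrable_deriv (hk : AC2On k T) (hT : 0 ≤ T) :
    IntervalIntegrable (deriv k) volume 0 T := by
  have hprim : ContinuousOn (fun t => deriv k 0 + ∫ s in (0 : ℝ)..t, deriv (deriv k) s)
      (Set.uIcc 0 T) :=
    continuousOn_const.add
      (intervalIntegral.continuousOn_primitive_interval' hk.2.1 Set.left_mem_uIcc)
  exact (hprim.congr fun t ht => hk.2.2 t (Set.uIcc_of_le hT ▸ ht)).intervalIntegrable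

lemma rlInt_two_deriv_deriv (hk : AC2On k T) (hT : 0 ≤ T) :
    rlInt 2 (deriv (deriv k)) T = k T - deriv k 0 * T - k 0 := by
  have hderiv : ∀ t ∈ Set.Icc 0 T, rlInt 1 (deriv (deriv k)) t = deriv k t - deriv k 0 :=
    fun t ht => by rw [rlInt_one_left, hk.2.2 t ht, add_sub_cancel_left]
  have hFTC : ∫ t in (0 : ℝ)..T, deriv k t = k T - k 0 :=
    intervalIntegral.integral_eq_sub_of_hasDerivAt
      (fun t ht => (hk.1 t (Set.uIcc_of_le hT ▸ ht)).hasDerivAt) (hk.intervalIntegrable_deriv hT)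
  calc rlInt 2 (deriv (deriv k)) T
      = rlInt 1 (rlInt 1 (deriv (deriv k))) T := by
        rw [rlInt_rlInt le_rfl one_pos hT hk.2.1, one_add_one_eq_two]
    _ = ∫ t in (0 : ℝ)..T, (deriv k t - deriv k 0) := by
        rw [rlInt_congr hT hderiv, rlInt_one_left]
    _ = k T - deriv k 0 * T - k 0 := by
        rw [intervalIntegral.integral_sub (hk.intervalIntegrable_deriv hT) intervalIntegrable_const,
          hFTC, intervalIntegral.integral_const, smul_eq_mul]
        ring

lemma rlInt_add_two_deriv_deriv (hk : AC2On k T) (hT : 0 < T) (hν : 1 ≤ ν) :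
    rlInt (ν + 2) (deriv (deriv k)) T
      = rlInt ν k T - deriv k 0 * (T ^ (ν + 1) / Real.Gamma (ν + 2))
        - k 0 * (T ^ ν / Real.Gamma (ν + 1)) := by
  have hcont : ContinuousOn k (Set.uIcc 0 T) := fun t ht =>
    (hk.1 t (Set.uIcc_of_le hT.le ▸ ht)).continuousAt.continuousWithinAt
  rw [← rlInt_rlInt hν two_pos hT.le hk.2.1, rlInt_congr hT.le fun t ht =>
    (hk.mono ht.1 ht.2).rlInt_two_deriv_deriv ht.1,
    rlInt_sub_affine hν hT hcont.intervalIntegrable]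

end AC2On

/-! ### Equations of Caputo and Riemann–Liouville type -/

/-- The function `₀I_t^{2−α}(w(s) − w₁ s − w₀)`, whose second derivative is the Caputo derivative of
`w` for `w₁ = w'(0)`, `w₀ = w(0)` and its Riemann–Liouville derivative for `w₁ = w₀ = 0`. -/
noncomputable def affineKernel (α w₁ w₀ : ℝ) (w : ℝ → ℝ) : ℝ → ℝ :=
  rlInt (2 - α) fun s => w s - w₁ * s - w₀

lemma capKernel_eq_affineKernel {α : ℝ} (hα : α ≠ 2) (w : ℝ → ℝ) :
    capKernel α w = affineKernel α (deriv w 0) (w 0) w :=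
  if_neg hα

/-- The terms that the initial values contribute when `₀I_t^μ` is applied to the second derivative
of `affineKernel α w₁ w₀ w`, where `k₁` is the derivative of this kernel at `0`. -/
noncomputable def initialTerm (α μ k₁ w₁ w₀ T : ℝ) : ℝ :=
  w₁ * (T ^ (μ - α + 1) / Real.Gamma (μ - α + 2)) + w₀ * (T ^ (μ - α) / Real.Gamma (μ - α + 1))
    + k₁ * (T ^ (μ - 1) / Real.Gamma μ)

section Representation

variable {γ α a w₁ w₀ μ T : ℝ} {f w : ℝ → ℝ}

lemma rlInt_deriv_deriv_affineKernel (hα : α < 2) (hμ : 3 ≤ μ) (hT : 0 < T)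
    (hw : IntervalIntegrable w volume 0 T) (hk : AC2On (affineKernel α w₁ w₀ w) T) :
    rlInt μ (deriv (deriv (affineKernel α w₁ w₀ w))) T
      = rlInt (μ - α) w T
        - initialTerm α μ (deriv (affineKernel α w₁ w₀ w) 0) w₁ w₀ T := by
  have hν : 1 ≤ μ - 2 := by linarith
  have hv : IntervalIntegrable (fun s => w s - w₁ * s - w₀) volume 0 T :=
    (hw.sub ((continuous_const_mul w₁).intervalIntegrable _ _)).sub intervalIntegrable_const
  have hk0 : affineKernel α w₁ w₀ w 0 = 0 := rlInt_zero_right _ _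
  have hmain := hk.rlInt_add_two_deriv_deriv hT hν
  rw [hk0, zero_mul, sub_zero, sub_add_cancel, show μ - 2 + 1 = μ - 1 by ring] at hmain
  rw [hmain, show rlInt (μ - 2) (affineKernel α w₁ w₀ w) T = _ from
      rlInt_rlInt hν (sub_pos.2 hα) hT.le hv,
    show μ - 2 + (2 - α) = μ - α by ring, rlInt_sub_affine (by linarith) hT hw, initialTerm]
  ring

lemma rlInt_add_eq_of_ae_eq (hγ : 0 < γ) (hα : α < 2) (hμ : 3 ≤ μ) (hT : 0 < T)
    (hf : IntervalIntegrable f volume 0 T) (hw : IntervalIntegrable w volume 0 T)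
    (hk : AC2On (affineKernel α w₁ w₀ w) T)
    (heq : ∀ᵐ t ∂volume.restrict (Set.Icc 0 T),
      deriv (deriv (affineKernel α w₁ w₀ w)) t + a * w t = rlInt γ f t) :
    rlInt (μ + γ) f T
      = rlInt (μ - α) w T + a * rlInt μ w T
        - initialTerm α μ (deriv (affineKernel α w₁ w₀ w) 0) w₁ w₀ T := by
  have hμ1 : 1 ≤ μ := by linarith
  rw [← rlInt_rlInt hμ1 hγ hT.le hf, ← rlInt_congr_ae hT.le heq,
    rlInt_add hμ1 hk.2.1 (hw.const_mul a), rlInt_const_mul,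
    rlInt_deriv_deriv_affineKernel hα hμ hT hw hk]
  ring

lemma mul_rlInt_abs_rpow_le {p b : ℝ} (hγ : 0 < γ) (hα : α < 2) (hμ : 3 ≤ μ) (hT : 0 < T)
    (hf : IntervalIntegrable f volume 0 T) (hw : IntervalIntegrable w volume 0 T)
    (hwp : IntervalIntegrable (fun s => |w s| ^ p) volume 0 T)
    (hk : AC2On (affineKernel α w₁ w₀ w) T)
    (heq : ∀ᵐ t ∂volume.restrict (Set.Icc 0 T),
      deriv (deriv (affineKernel α w₁ w₀ w)) t + a * w t = rlInt γ f t)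
    (hfw : ∀ᵐ t ∂volume.restrict (Set.Icc 0 T), b * |w t| ^ p ≤ f t) :
    b * rlInt (μ + γ) (fun s => |w s| ^ p) T
      ≤ rlInt (μ - α) (fun s => |w s|) T + |a| * rlInt μ (fun s => |w s|) T
        - initialTerm α μ (deriv (affineKernel α w₁ w₀ w) 0) w₁ w₀ T := by
  have hμα : rlInt (μ - α) w T ≤ rlInt (μ - α) (fun s => |w s|) T :=
    rlInt_mono_ae (by linarith) hT.le hw hw.abs (.of_forall fun s => le_abs_self _)
  have hμ_abs : a * rlInt μ w T ≤ |a| * rlInt μ (fun s => |w s|) T := by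
    rw [← rlInt_const_mul, ← rlInt_const_mul]
    refine rlInt_mono_ae (by linarith) hT.le (hw.const_mul a) (hw.abs.const_mul |a|)
      (.of_forall fun s => ?_)
    exact (le_abs_self _).trans_eq (abs_mul _ _)
  calc b * rlInt (μ + γ) (fun s => |w s| ^ p) T
      = rlInt (μ + γ) (fun s => b * |w s| ^ p) T := (rlInt_const_mul _ _ _ _).symm
    _ ≤ rlInt (μ + γ) f T := rlInt_mono_ae (by linarith) hT.le (hwp.const_mul b) hf hfw
    _ = rlInt (μ - α) w T + a * rlInt μ w T
        - initialTerm α μ (deriv (affineKernel α w₁ w₀ w) 0) w₁ w₀ T :=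
      rlInt_add_eq_of_ae_eq hγ hα hμ hT hf hw hk heq
    _ ≤ _ := by gcongr

end Representation

/-! ### Young's inequality -/

lemma exists_mul_le_mul_rpow_add_mul_rpow {p q ε : ℝ} (hpq : p.HolderConjugate q) (hε : 0 < ε) :
    ∃ K : ℝ, ∀ y z : ℝ, 0 ≤ y → 0 ≤ z → y * z ≤ ε * y ^ p + K * z ^ q := by
  have hp := hpq.pos
  set c := (ε * p) ^ (1 / p) with hc
  have hc0 : 0 < c := by positivity
  have hcp : c ^ p = ε * p := by
    rw [hc, ← Real.rpow_mul (by positivity), one_div_mul_cancel hp.ne', Real.rpow_one]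
  refine ⟨(c⁻¹) ^ q / q, fun y z hy hz => ?_⟩
  calc y * z = (c * y) * (c⁻¹ * z) := by field_simp
    _ ≤ (c * y) ^ p / p + (c⁻¹ * z) ^ q / q :=
        Real.young_inequality_of_nonneg (by positivity) (by positivity) hpq
    _ = ε * y ^ p + (c⁻¹) ^ q / q * z ^ q := by
        rw [Real.mul_rpow hc0.le hy, Real.mul_rpow (by positivity) hz, hcp]
        field_simp

lemma exists_rpow_mul_le_mul_add_mul_rpow {p ε : ℝ} (hp : 1 < p) (hε : 0 < ε) (q r : ℝ) :
    ∃ K : ℝ, ∀ x y : ℝ, 0 < x → 0 ≤ y →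
      x ^ q * y ≤ ε * (x ^ r * y ^ p) + K * x ^ ((p * q - r) / (p - 1)) := by
  have hpq := Real.HolderConjugate.conjExponent hp
  obtain ⟨K, hK⟩ := exists_mul_le_mul_rpow_add_mul_rpow hpq hε
  refine ⟨K, fun x y hx hy => ?_⟩
  have hp1 : p - 1 ≠ 0 := by linarith
  have hsplit : x ^ (r / p) * y * x ^ (q - r / p) = x ^ q * y := by
    rw [mul_right_comm, ← Real.rpow_add hx, add_sub_cancel]
  have hleft : (x ^ (r / p) * y) ^ p = x ^ r * y ^ p := by
    rw [Real.mul_rpow (by positivity) hy, ← Real.rpow_mul hx.le, div_mul_cancel₀ r hpq.ne_zero]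
  have hright : (x ^ (q - r / p)) ^ p.conjExponent = x ^ ((p * q - r) / (p - 1)) := by
    rw [← Real.rpow_mul hx.le, Real.conjExponent]
    congr 1
    have := hpq.ne_zero
    field_simp
  simpa only [hsplit, hleft, hright] using
    hK (x ^ (r / p) * y) (x ^ (q - r / p)) (by positivity) (by positivity)

lemma exists_rlInt_abs_le {p ε q r : ℝ} {w : ℝ → ℝ} (hp : 1 < p) (hε : 0 < ε) (hq : 1 ≤ q)
    (hr : 1 ≤ r) (he : 0 < (p * q - r) / (p - 1))
    (hw : ∀ T > 0, IntervalIntegrable w volume 0 T)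
    (hwp : ∀ T > 0, IntervalIntegrable (fun s => |w s| ^ p) volume 0 T) :
    ∃ K : ℝ, ∀ T > 0, rlInt q (fun s => |w s|) T
      ≤ ε * rlInt r (fun s => |w s| ^ p) T + K * T ^ ((p * q - r) / (p - 1)) := by
  set e := (p * q - r) / (p - 1) with he_def
  have hΓq : 0 < Real.Gamma q := Real.Gamma_pos_of_pos (by linarith)
  have hΓr : 0 < Real.Gamma r := Real.Gamma_pos_of_pos (by linarith)
  set δ := Real.Gamma q / Real.Gamma r * ε with hδ
  have hδ0 : 0 < δ := mul_pos (div_pos hΓq hΓr) hε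
  obtain ⟨K, hK⟩ := exists_rpow_mul_le_mul_add_mul_rpow hp hδ0 (q - 1) (r - 1)
  have hexp : (p * (q - 1) - (r - 1)) / (p - 1) = e - 1 := by
    have : p - 1 ≠ 0 := by linarith
    rw [he_def]
    field_simp
    ring
  rw [hexp] at hK
  refine ⟨K / (Real.Gamma q * e), fun T hT => ?_⟩
  have hleft := (intervalIntegrable_sub_rpow_mul hr T (hwp T hT)).const_mul δ
  have hright := (intervalIntegrable_sub_rpow he 0 T).const_mul K
  have hint := intervalIntegral.integral_mono_on_of_le_Ioo hT.le
    (intervalIntegrable_sub_rpow_mul hq T (hw T hT).abs) (hleft.add hright)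
    fun s hs => hK (T - s) |w s| (sub_pos.2 hs.2) (abs_nonneg _)
  rw [intervalIntegral.integral_add hleft hright, intervalIntegral.integral_const_mul,
    intervalIntegral.integral_const_mul, integral_sub_rpow he, sub_zero] at hint
  refine (mul_le_mul_of_nonneg_left hint (one_div_pos.2 hΓq).le).trans_eq ?_
  rw [rlInt, hδ]
  field_simp

/-! ### The a priori estimate -/

lemma rpow_isBigO_rpow_atTop {s t : ℝ} (hst : s ≤ t) :
    (fun x : ℝ => x ^ s) =O[atTop] fun x => x ^ t := by
  refine IsBigO.of_bound 1 ?_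
  filter_upwards [eventually_ge_atTop 1] with x hx
  have hx0 : 0 ≤ x := by linarith
  rw [one_mul, Real.norm_of_nonneg (Real.rpow_nonneg hx0 _),
    Real.norm_of_nonneg (Real.rpow_nonneg hx0 _)]
  exact Real.rpow_le_rpow_of_exponent_le hx hst

lemma initialTerm_isBigO {α μ e : ℝ} (hα : α ≤ 2) (he : μ - α + 1 ≤ e) (k₁ w₁ w₀ : ℝ) :
    initialTerm α μ k₁ w₁ w₀ =O[atTop] fun T => T ^ e := by
  have hterm (c : ℝ) {x : ℝ} (g : ℝ) (hx : x ≤ e) :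
      (fun T : ℝ => c * (T ^ x / g)) =O[atTop] fun T => T ^ e := by
    simp only [div_eq_inv_mul, ← mul_assoc]
    exact (rpow_isBigO_rpow_atTop hx).const_mul_left _
  exact ((hterm w₁ _ he).add (hterm w₀ _ (by linarith))).add (hterm k₁ _ (by linarith))

lemma intervalIntegrable_abs_rpow_of_mul_le {p b T : ℝ} {f w : ℝ → ℝ} (hb : 0 < b) (hT : 0 ≤ T)
    (hf : IntervalIntegrable f volume 0 T) (hw : IntervalIntegrable w volume 0 T)
    (hfw : ∀ᵐ t ∂volume.restrict (Set.Icc 0 T), b * |w t| ^ p ≤ f t) :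
    IntervalIntegrable (fun s => |w s| ^ p) volume 0 T := by
  rw [intervalIntegrable_iff_integrableOn_Ioc_of_le hT] at hf hw ⊢
  refine (hf.const_mul b⁻¹).mono' (hw.abs.aemeasurable.pow_const p).aestronglyMeasurable ?_
  filter_upwards [ae_restrict_of_ae_restrict_of_subset Set.Ioc_subset_Icc_self hfw] with s hs
  rw [Real.norm_of_nonneg (by positivity)]
  exact (le_inv_mul_iff₀ hb).2 hs

section Absorption

variable {γ α p a b w₁ w₀ : ℝ} {f w : ℝ → ℝ}

/-- Young's inequality absorbs both terms in `|w|` of `mul_rlInt_abs_rpow_le` into the left side. -/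
lemma exists_half_mul_rlInt_abs_rpow_le {μ : ℝ} (hγ : 0 < γ) (hα : α < 2) (hp : 1 < p) (hb : 0 < b)
    (hμ : 3 ≤ μ) (he₁ : 0 < (p * (μ - α) - (μ + γ)) / (p - 1))
    (he₂ : 0 < (p * μ - (μ + γ)) / (p - 1))
    (hf : ∀ T > 0, IntervalIntegrable f volume 0 T)
    (hw : ∀ T > 0, IntervalIntegrable w volume 0 T)
    (hwp : ∀ T > 0, IntervalIntegrable (fun s => |w s| ^ p) volume 0 T)
    (hk : ∀ T > 0, AC2On (affineKernel α w₁ w₀ w) T)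
    (heq : ∀ T > 0, ∀ᵐ t ∂volume.restrict (Set.Icc 0 T),
      deriv (deriv (affineKernel α w₁ w₀ w)) t + a * w t = rlInt γ f t)
    (hfw : ∀ T > 0, ∀ᵐ t ∂volume.restrict (Set.Icc 0 T), b * |w t| ^ p ≤ f t) :
    ∃ K₁ K₂ : ℝ, ∀ T > 0, b / 2 * rlInt (μ + γ) (fun s => |w s| ^ p) T
      ≤ K₁ * T ^ ((p * (μ - α) - (μ + γ)) / (p - 1)) + K₂ * T ^ ((p * μ - (μ + γ)) / (p - 1))
        - initialTerm α μ (deriv (affineKernel α w₁ w₀ w) 0) w₁ w₀ T := by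
  obtain ⟨K₁, hK₁⟩ := exists_rlInt_abs_le (w := w) (ε := b / 4) hp (by positivity)
    (by linarith) (by linarith) he₁ hw hwp
  obtain ⟨K₂, hK₂⟩ := exists_rlInt_abs_le (w := w) (ε := b / (4 * (|a| + 1))) hp (by positivity)
    (by linarith) (by linarith) he₂ hw hwp
  refine ⟨K₁, |a| * K₂, fun T hT => ?_⟩
  have hX : 0 ≤ rlInt (μ + γ) (fun s => |w s| ^ p) T :=
    rlInt_nonneg (by linarith) hT.le fun s _ => by positivity
  have hεa : |a| * (b / (4 * (|a| + 1))) ≤ b / 4 := by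
    rw [mul_div_assoc', div_le_div_iff₀ (by positivity) (by norm_num)]
    nlinarith
  have hest := mul_rlInt_abs_rpow_le hγ hα hμ hT (hf T hT) (hw T hT) (hwp T hT) (hk T hT)
    (heq T hT) (hfw T hT)
  linarith [hK₁ T hT, mul_le_mul_of_nonneg_left (hK₂ T hT) (abs_nonneg a),
    mul_le_mul_of_nonneg_right hεa hX]

lemma exists_rlInt_abs_rpow_isBigO {δ : ℝ} (hγ : 0 < γ) (hα0 : 0 ≤ α) (hα : α < 2) (hp : 1 < p)
    (hb : 0 < b) (hδ : δ ≤ α + γ - 1) (hδ' : δ ≤ γ + γ / (p - 1))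
    (hf : ∀ T > 0, IntervalIntegrable f volume 0 T)
    (hw : ∀ T > 0, IntervalIntegrable w volume 0 T)
    (hwp : ∀ T > 0, IntervalIntegrable (fun s => |w s| ^ p) volume 0 T)
    (hk : ∀ T > 0, AC2On (affineKernel α w₁ w₀ w) T)
    (heq : ∀ T > 0, ∀ᵐ t ∂volume.restrict (Set.Icc 0 T),
      deriv (deriv (affineKernel α w₁ w₀ w)) t + a * w t = rlInt γ f t)
    (hfw : ∀ T > 0, ∀ᵐ t ∂volume.restrict (Set.Icc 0 T), b * |w t| ^ p ≤ f t) :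
    ∃ ρ ≥ 1, rlInt ρ (fun s => |w s| ^ p) =O[atTop] fun T => T ^ (ρ - δ) := by
  have hp1 : 0 < p - 1 := by linarith
  have hfrac : 0 ≤ γ / (p - 1) := by positivity
  have hfracα : 0 ≤ p * α / (p - 1) := by positivity
  set μ := 3 + p * α / (p - 1) + γ / (p - 1) with hμ
  have he₁ : (p * (μ - α) - (μ + γ)) / (p - 1) = 3 := by
    rw [hμ]
    field_simp
    ring
  have he₂ : (p * μ - (μ + γ)) / (p - 1) = μ - γ / (p - 1) := by
    field_simp
    ring
  obtain ⟨K₁, K₂, hK⟩ := exists_half_mul_rlInt_abs_rpow_le (μ := μ) hγ hα hp hb (by linarith)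
    (by rw [he₁]; norm_num) (by rw [he₂]; linarith) hf hw hwp hk heq hfw
  rw [he₁, he₂] at hK
  set G : ℝ → ℝ := fun T => K₁ * T ^ (3 : ℝ) + K₂ * T ^ (μ - γ / (p - 1))
    - initialTerm α μ (deriv (affineKernel α w₁ w₀ w) 0) w₁ w₀ T
  have hG : G =O[atTop] fun T => T ^ (μ + γ - δ) :=
    (((rpow_isBigO_rpow_atTop (by linarith)).const_mul_left _).add
      ((rpow_isBigO_rpow_atTop (by linarith)).const_mul_left _)).sub
      (initialTerm_isBigO hα.le (by linarith) _ _ _)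
  refine ⟨μ + γ, by linarith, IsBigO.trans (IsBigO.of_bound (2 / b) ?_) hG⟩
  filter_upwards [eventually_gt_atTop 0] with T hT
  rw [Real.norm_of_nonneg (rlInt_nonneg (by linarith) hT.le fun s _ => by positivity),
    div_mul_eq_mul_div, le_div_iff₀ hb]
  linarith [hK T hT, Real.le_norm_self (G T)]

end Absorption

/-! ### Decay along a sequence -/

lemma mul_rpow_div_Gamma_le_rlInt {ρ c R T : ℝ} {u : ℝ → ℝ} (hρ : 1 ≤ ρ) (hR : 0 ≤ R) (hRT : R ≤ T)
    (hu : IntervalIntegrable u volume 0 T) (hu0 : ∀ s ∈ Set.Icc 0 T, 0 ≤ u s)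
    (hc : ∀ s ∈ Set.Icc R T, c ≤ u s) :
    c * ((T - R) ^ ρ / Real.Gamma (ρ + 1)) ≤ rlInt ρ u T := by
  have hρ0 : 0 < ρ := by linarith
  have hΓ := Real.Gamma_pos_of_pos hρ0
  have hT : 0 ≤ T := hR.trans hRT
  have hker : ∀ s ∈ Set.Icc 0 T, 0 ≤ (T - s) ^ (ρ - 1) := fun s hs =>
    Real.rpow_nonneg (sub_nonneg.2 hs.2) _
  have hint := intervalIntegrable_sub_rpow_mul hρ T hu
  have hint_R : IntervalIntegrable (fun s => (T - s) ^ (ρ - 1) * u s) volume R T :=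
    hint.mono_set (by
      rw [Set.uIcc_of_le hRT, Set.uIcc_of_le hT]
      exact Set.Icc_subset_Icc_left hR)
  have hlower : c * ((T - R) ^ ρ / ρ) ≤ ∫ s in (0 : ℝ)..T, (T - s) ^ (ρ - 1) * u s := by
    calc c * ((T - R) ^ ρ / ρ) = ∫ s in R..T, (T - s) ^ (ρ - 1) * c := by
          rw [intervalIntegral.integral_mul_const, integral_sub_rpow hρ0, mul_comm]
      _ ≤ ∫ s in R..T, (T - s) ^ (ρ - 1) * u s :=
          intervalIntegral.integral_mono_on hRT
            (intervalIntegrable_sub_rpow_mul hρ T intervalIntegrable_const) hint_R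
            fun s hs => mul_le_mul_of_nonneg_left (hc s hs) (hker s ⟨hR.trans hs.1, hs.2⟩)
      _ ≤ ∫ s in (0 : ℝ)..T, (T - s) ^ (ρ - 1) * u s := by
          refine intervalIntegral.integral_mono_interval hR hRT le_rfl ?_ hint
          filter_upwards [ae_restrict_mem measurableSet_Ioc] with s hs
          have hs' := Set.Ioc_subset_Icc_self hs
          exact mul_nonneg (hker s hs') (hu0 s hs')
  rw [Real.Gamma_add_one hρ0.ne', rlInt]
  refine le_trans (le_of_eq ?_) (mul_le_mul_of_nonneg_left hlower (one_div_pos.2 hΓ).le)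
  field_simp

lemma exists_frequently_rpow_mul_le {ρ δ : ℝ} {u : ℝ → ℝ} (hρ : 1 ≤ ρ) (hδ : 0 ≤ δ)
    (hu : ∀ T > 0, IntervalIntegrable u volume 0 T) (hu0 : ∀ t, 0 ≤ u t)
    (hO : rlInt ρ u =O[atTop] fun T => T ^ (ρ - δ)) :
    ∃ A, ∃ᶠ t in atTop, t ^ δ * u t ≤ A := by
  obtain ⟨C, hC⟩ := hO.bound
  have hΓ : 0 < Real.Gamma (ρ + 1) := Real.Gamma_pos_of_pos (by linarith)
  refine ⟨C * 2 ^ ρ * Real.Gamma (ρ + 1) + 1, fun hcon => ?_⟩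
  set A := C * 2 ^ ρ * Real.Gamma (ρ + 1) + 1
  simp only [not_le] at hcon
  obtain ⟨R₀, hR₀⟩ := eventually_atTop.1 hcon
  obtain ⟨T, hTC, hT0, hTR₀⟩ := (hC.and ((eventually_gt_atTop (0 : ℝ)).and
    (eventually_ge_atTop (2 * R₀)))).exists
  have hlow : ∀ s ∈ Set.Icc (T / 2) T, A / T ^ δ ≤ u s := by
    intro s hs
    have hs0 : 0 < s := by linarith [hs.1]
    have hpow : s ^ δ ≤ T ^ δ := Real.rpow_le_rpow hs0.le hs.2 hδ
    rw [div_le_iff₀' (by positivity)]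
    exact (hR₀ s (by linarith [hs.1])).le.trans (mul_le_mul_of_nonneg_right hpow (hu0 s))
  have hlower := mul_rpow_div_Gamma_le_rlInt hρ (by positivity) (by linarith) (hu T hT0)
    (fun s _ => hu0 s) hlow
  have hupper : rlInt ρ u T ≤ C * (T ^ ρ / T ^ δ) := by
    rw [← Real.rpow_sub hT0]
    simpa [abs_of_pos (Real.rpow_pos_of_pos hT0 _)] using (le_abs_self _).trans hTC
  have hcompare := hlower.trans hupper
  rw [sub_half, Real.div_rpow hT0.le two_pos.le] at hcompare
  have hTρ : 0 < T ^ ρ := by positivity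
  have hTδ : 0 < T ^ δ := by positivity
  field_simp at hcompare
  linarith

lemma liminf_coe_lt_top_of_frequently_le {ι : Type*} {l : Filter ι} {u : ι → ℝ} {A : ℝ}
    (h : ∃ᶠ i in l, u i ≤ A) : liminf (fun i => (u i : EReal)) l < ⊤ :=
  (liminf_le_of_frequently_le' (h.mono fun _ hi => EReal.coe_le_coe_iff.2 hi)).trans_lt
    (EReal.coe_lt_top A)

lemma liminf_coe_eq_zero_of_frequently_mul_le {ι : Type*} {l : Filter ι} {φ u : ι → ℝ} {A : ℝ}
    (hu : ∀ i, 0 ≤ u i) (hφ : Tendsto φ l atTop) (h : ∃ᶠ i in l, φ i * u i ≤ A) :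
    liminf (fun i => (u i : EReal)) l = 0 := by
  refine le_antisymm (EReal.le_of_forall_lt_iff_le.1 fun z hz => ?_)
    (le_liminf_of_le (by isBoundedDefault) (.of_forall fun i => EReal.coe_nonneg.2 (hu i)))
  have hz0 : 0 < z := EReal.coe_pos.1 hz
  refine liminf_le_of_frequently_le' ?_
  refine (h.and_eventually ((hφ.eventually_ge_atTop (A / z)).and
    (hφ.eventually_gt_atTop 0))).mono fun i ⟨hA, hge, hpos⟩ => EReal.coe_le_coe_iff.2 ?_
  exact le_of_mul_le_mul_left (hA.trans ((div_le_iff₀ hz0).1 hge)) hpos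

theorem liminf_props_eq_general {γ α p a b w₁ w₀ : ℝ} {f w : ℝ → ℝ}
    (hγ : 0 < γ) (hα0 : 0 ≤ α) (hα : α < 2) (hαγ : 1 < α + γ) (hp : 1 < p) (hb : 0 < b)
    (hf : ∀ T > 0, IntervalIntegrable f volume 0 T)
    (hw : ∀ T > 0, IntervalIntegrable w volume 0 T)
    (hAC : ∀ T > 0, AC2On (affineKernel α w₁ w₀ w) T)
    (heq : ∀ᵐ t ∂volume.restrict (Set.Ici 0),
      deriv (deriv (affineKernel α w₁ w₀ w)) t + a * w t = rlInt γ f t ∧ b * |w t| ^ p ≤ f t) :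
    liminf (fun t : ℝ => ((|w t| : ℝ) : EReal)) atTop = 0 ∧
    liminf (fun t : ℝ =>
      ((t ^ min ((α + γ - 1) / p) (γ / (p - 1)) * |w t| : ℝ) : EReal)) atTop < ⊤ := by
  set θ := min ((α + γ - 1) / p) (γ / (p - 1))
  have hp0 : 0 < p := by linarith
  have hp1 : 0 < p - 1 := by linarith
  have hθ : 0 < θ := lt_min (div_pos (by linarith) hp0) (div_pos hγ hp1)
  have hθp : θ * p ≤ α + γ - 1 := (le_div_iff₀ hp0).1 (min_le_left _ _)
  have hθp' : θ * p ≤ γ + γ / (p - 1) := by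
    linarith [(le_div_iff₀ hp1).1 (min_le_right ((α + γ - 1) / p) (γ / (p - 1))),
      min_le_right ((α + γ - 1) / p) (γ / (p - 1))]
  have heqT (T : ℝ) := ae_restrict_of_ae_restrict_of_subset
    (Set.Icc_subset_Ici_self : Set.Icc 0 T ⊆ _) heq
  have hfw (T : ℝ) := (heqT T).mono fun _ => And.right
  have hwp : ∀ T > 0, IntervalIntegrable (fun s => |w s| ^ p) volume 0 T := fun T hT =>
    intervalIntegrable_abs_rpow_of_mul_le hb hT.le (hf T hT) (hw T hT) (hfw T)
  obtain ⟨ρ, hρ, hO⟩ := exists_rlInt_abs_rpow_isBigO hγ hα0 hα hp hb hθp hθp' hf hw hwp hAC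
    (fun T _ => (heqT T).mono fun _ => And.left) fun T _ => hfw T
  obtain ⟨A, hA⟩ := exists_frequently_rpow_mul_le hρ (by positivity) hwp
    (fun t => by positivity) hO
  have hfreq : ∃ᶠ t : ℝ in atTop, t ^ θ * |w t| ≤ A ^ (1 / p) := by
    refine (hA.and_eventually (eventually_ge_atTop 0)).mono fun t ⟨htA, ht⟩ => ?_
    rw [Real.rpow_mul ht, ← Real.mul_rpow (by positivity) (abs_nonneg _)] at htA
    simpa only [one_div] using (Real.le_rpow_inv_iff_of_pos (by positivity)
      (htA.trans' (by positivity)) hp0).2 htA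
  exact ⟨liminf_coe_eq_zero_of_frequently_mul_le (fun t => abs_nonneg _) (tendsto_rpow_atTop hθ)
    hfreq, liminf_coe_lt_top_of_frequently_le hfreq⟩

/-- Lemma 2.3 (ii): liminf |w| = 0 and liminf t^{min{(α+γ−1)/p, γ/(p−1)}} |w| < ∞. -/
theorem liminf_props_eq
    (γ α p a b : ℝ) (f w : ℝ → ℝ)
    (hγ : 0 < γ) (hα1 : 1 < α) (hα2 : α < 2) (hp : 1 < p) (ha : 0 < a) (hb : 0 < b)
    (hf : ∀ T > (0:ℝ), IntervalIntegrable f volume 0 T)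
    (hw : ContDiff ℝ 1 w)
    (hw0 : ∃ t : ℝ, 0 ≤ t ∧ w t ≠ 0)
    (hAC : ∀ T > (0:ℝ), AC2On (capKernel α w) T)
    (heq : ∀ᵐ t ∂(volume.restrict (Set.Ici (0:ℝ))),
      caputoD α w t + a * w t = rlInt γ f t ∧ f t ≥ b * |w t| ^ p)
    :
    liminf (fun t : ℝ => ((|w t| : ℝ) : EReal)) atTop = 0 ∧
    liminf (fun t : ℝ =>
      ((t ^ (min ((α + γ - 1) / p) (γ / (p - 1))) * |w t| : ℝ) : EReal)) atTop < ⊤ := by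
  rw [capKernel_eq_affineKernel hα2.ne] at hAC
  rw [caputoD, capKernel_eq_affineKernel hα2.ne] at heq
  exact liminf_props_eq_general hγ (by linarith) hα2 (by linarith) hp hb hf
    (fun _ _ => hw.continuous.intervalIntegrable _ _) hAC heq
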